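/- Every Π⁰₁ equivalence relation E on ω is computably reducible to the word problem of some finitely generated group of computable permutations of ω. In particular, there is a group generated by three computable permutations whose word problem is Π⁰₁-universal. -/

import Mathlib

/-- The c.e. set with index `e` in a standard enumeration. -/
def WSet (e : ℕ) : Set ℕ := {n | ((Denumerable.ofNat Nat.Partrec.Code e).eval n).Dom}

/-- A set of naturals is computably enumerable. -/
def CeSet (A : Set ℕ) : Prop := ∃ e : ℕ, A = WSet e

/-- Product of two sets of naturals under the standard pairing. -/
def ProdSet (A C : Set ℕ) : Set ℕ := {p | p.unpair.1 ∈ A ∧ p.unpair.2 ∈ C}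

/-- `(A, B)` is an effectively inseparable pair. -/
def EffInsep (A B : Set ℕ) : Prop :=
  ∃ ψ : ℕ →. ℕ, Partrec ψ ∧
    ∀ u v : ℕ, A ⊆ WSet u → B ⊆ WSet v → WSet u ∩ WSet v = ∅ →
      ∃ z ∈ ψ (Nat.pair u v), z ∉ WSet u ∪ WSet v
/-- A binary relation on ℕ is Π⁰₁: its complement is computably enumerable. -/
def Pi01Rel (E : ℕ → ℕ → Prop) : Prop :=
  ∃ e : ℕ, ∀ x y : ℕ, ¬ E x y ↔ Nat.pair x y ∈ WSet e

/-!
If `E` is a `Π⁰₁` equivalence relation and `u`, `v` are inequivalent, then a computable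
`E`-invariant set contains `u` but not `v`. Indeed, keep two finite lists, initially `[u]` and
`[v]`, such that no entry of one is equivalent to an entry of the other. By transitivity, no `x` is
equivalent both to an entry of the first list and to an entry of the second, so enumerating the
inequivalent pairs reveals a list to which `x` can be added; do this for `x = 0, 1, 2, …`. The
characteristic functions of all these sets reduce `E` to the equality of rows of a computable family
of functions, and a single computable family `F` is universal among such families.

To encode equality of rows of `F` into a word problem, let one generator shift the rows, let the
second one transpose `1` and `F m n + 2` at row `m` and column `n`, and let the third one transpose
`0` and `1` at row `0`. Conjugating the second generator by the `m`-th power of the first brings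
row `m` to row `0`, and conjugating the third generator by the result gives the transpositions of
`0` and `F m n + 2` at row `0`, a permutation that determines the function `F m`.
-/

open Denumerable Encodable
open Equiv (Perm swap)
open Nat.Partrec (Code)

section Reducibility

variable {α β γ : Type*} [Primcodable α] [Primcodable β] [Primcodable γ]

/-- Computable reducibility `R ≤ S` of binary relations. -/
def ComputablyReducible (R : α → α → Prop) (S : β → β → Prop) : Prop :=
  ∃ f : α → β, Computable f ∧ ∀ x y, R x y ↔ S (f x) (f y)

theorem ComputablyReducible.trans {R : α → α → Prop} {S : β → β → Prop} {T : γ → γ → Prop}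
    (hRS : ComputablyReducible R S) (hST : ComputablyReducible S T) :
    ComputablyReducible R T :=
  let ⟨f, hf, hRS⟩ := hRS
  let ⟨g, hg, hST⟩ := hST
  ⟨g ∘ f, hg.comp hf, fun x y => (hRS x y).trans (hST (f x) (f y))⟩

end Reducibility

section BoundedHalting

/-- Within `k` steps, the code `c` is seen to halt on every input in the list `l`. -/
def HaltsWithin (c : Code) (k : ℕ) (l : List ℕ) : Prop :=
  ∀ m ∈ l, (c.evaln k m).isSome

instance (c : Code) (k : ℕ) (l : List ℕ) : Decidable (HaltsWithin c k l) :=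
  inferInstanceAs (Decidable (∀ m ∈ l, _))

theorem primrecPred_haltsWithin :
    PrimrecPred fun q : (Code × ℕ) × List ℕ => HaltsWithin q.1.1 q.1.2 q.2 := by
  have h : PrimrecRel fun (m : ℕ) (q : Code × ℕ) => (q.1.evaln q.2 m).isSome :=
    Primrec.eq.comp (Primrec.option_isSome.comp <| Code.primrec_evaln.comp <|
      ((Primrec.snd.comp .snd).pair (Primrec.fst.comp .snd)).pair .fst) (.const true)
  exact h.forall_mem_list.comp .snd .fst

theorem exists_haltsWithin_iff {c : Code} {l : List ℕ} :
    (∃ k, HaltsWithin c k l) ↔ ∀ m ∈ l, (c.eval m).Dom := by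
  constructor
  · rintro ⟨k, hk⟩ m hm
    obtain ⟨v, hv⟩ := Option.isSome_iff_exists.1 (hk m hm)
    exact Part.dom_iff_mem.2 ⟨v, Code.evaln_sound hv⟩
  · intro h
    have halts : ∀ m ∈ l, ∀ᶠ k in Filter.atTop, (c.evaln k m).isSome := by
      intro m hm
      obtain ⟨v, hv⟩ := Part.dom_iff_mem.1 (h m hm)
      obtain ⟨k, hk⟩ := Code.evaln_complete.1 hv
      filter_upwards [Filter.eventually_ge_atTop k] with k' hkk'
      exact Option.isSome_of_mem (Code.evaln_mono hkk' hk)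
    exact ((List.finite_toSet l).eventually_all.2 halts).exists

end BoundedHalting

section Separation

theorem exists_computable₂_orbit {α σ : Type*} [Primcodable α] [Primcodable σ]
    {P : σ → Prop} {init : α → σ} {step : ℕ → σ →. σ} (hinit : Computable init)
    (hstep : Partrec₂ step) (init_mem : ∀ a, P (init a))
    (step_mem : ∀ x s, P s → ∃ t ∈ step x s, P t) :
    ∃ S : α → ℕ → σ, Computable₂ S ∧ (∀ a, S a 0 = init a) ∧
      ∀ a x, P (S a x) ∧ S a (x + 1) ∈ step x (S a x) := by
  choose! next next_mem next_P using step_mem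
  let S (a : α) (x : ℕ) : σ := x.rec (init a) next
  have hP (a : α) (x : ℕ) : P (S a x) := by
    induction x with
    | zero => exact init_mem a
    | succ x ih => exact next_P x _ ih
  have hS (a : α) (x : ℕ) : S a (x + 1) ∈ step x (S a x) := next_mem x _ (hP a x)
  refine ⟨S, ?_, fun _ => rfl, fun a x => ⟨hP a x, hS a x⟩⟩
  have hrec := Partrec.nat_rec (f := fun q : α × ℕ => q.2) (h := fun _ r => step r.1 r.2)
    .snd (hinit.comp .fst).partrec
    (hstep.comp (Computable.fst.comp .snd) (Computable.snd.comp .snd))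
  refine hrec.of_eq_tot fun ⟨a, x⟩ => ?_
  induction x with
  | zero => exact Part.mem_some _
  | succ x ih => exact Part.mem_bind ih (hS a x)

variable {E : ℕ → ℕ → Prop} {c : Code} {x : ℕ} {S T : List ℕ × List ℕ}

/-- No element of the first list is related to an element of the second: such pairs of lists are
the finite stages of a separation of two `E`-inequivalent numbers by an `E`-invariant set. -/
def Apart (E : ℕ → ℕ → Prop) (S : List ℕ × List ℕ) : Prop :=
  ∀ a ∈ S.1, ∀ b ∈ S.2, ¬ E a b

/-- Add `x` to one of the two lists, as soon as the code `c` is seen to halt on all pairs formed by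
the entries of the other list and `x`. -/
def addApart (c : Code) (x : ℕ) (S : List ℕ × List ℕ) : Part (List ℕ × List ℕ) :=
  Nat.rfindOpt fun k =>
    if HaltsWithin c k (S.1.map (Nat.pair · x)) then some (S.1, x :: S.2)
    else if HaltsWithin c k (S.2.map (Nat.pair · x)) then some (x :: S.1, S.2)
    else none

theorem partrec₂_addApart (c : Code) : Partrec₂ (addApart c) := by
  have hpair : Primrec₂ fun (l : List ℕ) (x : ℕ) => l.map (Nat.pair · x) :=
    Primrec.list_map .fst (Primrec₂.natPair.comp .snd (Primrec.snd.comp .fst))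
  have hhalts {f : (ℕ × (List ℕ × List ℕ)) × ℕ → List ℕ} (hf : Primrec f) :
      PrimrecPred fun q => HaltsWithin c q.2 ((f q).map (Nat.pair · q.1.1)) :=
    primrecPred_haltsWithin.comp
      (((Primrec.const c).pair .snd).pair (hpair.comp hf (Primrec.fst.comp .fst)))
  have hx : Primrec fun q : (ℕ × (List ℕ × List ℕ)) × ℕ => q.1.1 := .comp .fst .fst
  have hS : Primrec fun q : (ℕ × (List ℕ × List ℕ)) × ℕ => q.1.2 := .comp .snd .fst
  have hS₁ := Primrec.fst.comp hS
  have hS₂ := Primrec.snd.comp hS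
  exact Partrec.rfindOpt <| Primrec.to_comp <|
    .ite (hhalts hS₁) (Primrec.option_some.comp (hS₁.pair (Primrec.list_cons.comp hx hS₂))) <|
    .ite (hhalts hS₂) (Primrec.option_some.comp ((Primrec.list_cons.comp hx hS₁).pair hS₂)) <|
    .const none

theorem eq_of_mem_addApart (hT : T ∈ addApart c x S) :
    (T = (S.1, x :: S.2) ∧ ∀ a ∈ S.1, (c.eval (Nat.pair a x)).Dom) ∨
      (T = (x :: S.1, S.2) ∧ ∀ b ∈ S.2, (c.eval (Nat.pair b x)).Dom) := by
  obtain ⟨k, hk⟩ := Nat.rfindOpt_spec hT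
  split_ifs at hk with h₁ h₂
  · exact .inl ⟨(Option.mem_some_iff.1 hk).symm, by simpa using exists_haltsWithin_iff.1 ⟨k, h₁⟩⟩
  · exact .inr ⟨(Option.mem_some_iff.1 hk).symm, by simpa using exists_haltsWithin_iff.1 ⟨k, h₂⟩⟩
  · cases hk

theorem addApart_dom (h : (∀ a ∈ S.1, (c.eval (Nat.pair a x)).Dom) ∨
    ∀ b ∈ S.2, (c.eval (Nat.pair b x)).Dom) : (addApart c x S).Dom := by
  refine Nat.rfindOpt_dom.2 ?_
  rcases h with h | h <;>
  · obtain ⟨k, hk⟩ := exists_haltsWithin_iff.2 (List.forall_mem_map.2 h)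
    refine ⟨k, ?_⟩
    split_ifs <;> simp

theorem subset_of_mem_addApart (hT : T ∈ addApart c x S) : S.1 ⊆ T.1 ∧ S.2 ⊆ T.2 := by
  rcases eq_of_mem_addApart hT with ⟨rfl, -⟩ | ⟨rfl, -⟩ <;> simp

theorem mem_or_mem_of_mem_addApart (hT : T ∈ addApart c x S) : x ∈ T.1 ∨ x ∈ T.2 := by
  rcases eq_of_mem_addApart hT with ⟨rfl, -⟩ | ⟨rfl, -⟩ <;> simp

theorem Apart.exists_mem_addApart (hE : Equivalence E)
    (hc : ∀ x y, ¬ E x y ↔ (c.eval (Nat.pair x y)).Dom) (x : ℕ) (S : List ℕ × List ℕ)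
    (hS : Apart E S) : ∃ T ∈ addApart c x S, Apart E T := by
  have hdom : (addApart c x S).Dom := by
    apply addApart_dom
    simp only [← hc]
    by_contra! h
    obtain ⟨⟨a, ha, hax⟩, b, hb, hbx⟩ := h
    exact hS a ha b hb (hE.trans hax (hE.symm hbx))
  obtain ⟨T, hT⟩ := Part.dom_iff_mem.1 hdom
  refine ⟨T, hT, ?_⟩
  rcases eq_of_mem_addApart hT with ⟨rfl, hx⟩ | ⟨rfl, hx⟩ <;> simp only [← hc] at hx
  · intro a ha b hb
    rcases List.mem_cons.1 hb with rfl | hb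
    exacts [hx a ha, hS a ha b hb]
  · intro a ha b hb
    rcases List.mem_cons.1 ha with rfl | ha
    exacts [fun hab => hx b hb (hE.symm hab), hS a ha b hb]

/-- A sequence of apart pairs of lists in which the number `x` is added at stage `x`. The union of
the first lists is then an `E`-invariant set. -/
def IsApartChain (E : ℕ → ℕ → Prop) (c : Code) (S : ℕ → List ℕ × List ℕ) : Prop :=
  ∀ x, Apart E (S x) ∧ S (x + 1) ∈ addApart c x (S x)

namespace IsApartChain

variable {S : ℕ → List ℕ × List ℕ} {a b m n x y : ℕ}

theorem subset (hS : IsApartChain E c S) (hmn : m ≤ n) :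
    (S m).1 ⊆ (S n).1 ∧ (S m).2 ⊆ (S n).2 := by
  induction n, hmn using Nat.le_induction with
  | base => exact ⟨List.Subset.refl _, List.Subset.refl _⟩
  | succ n _ ih =>
    have hstep := subset_of_mem_addApart (hS n).2
    exact ⟨List.Subset.trans ih.1 hstep.1, List.Subset.trans ih.2 hstep.2⟩

theorem not_rel (hS : IsApartChain E c S) (ha : a ∈ (S m).1) (hb : b ∈ (S n).2) : ¬ E a b :=
  (hS (max m n)).1 a ((hS.subset (le_max_left m n)).1 ha) b ((hS.subset (le_max_right m n)).2 hb)

theorem mem_of_rel (hS : IsApartChain E c S) (hxy : E x y) (hx : x ∈ (S (x + 1)).1) :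
    y ∈ (S (y + 1)).1 :=
  (mem_or_mem_of_mem_addApart (hS y).2).resolve_right fun hy => hS.not_rel hx hy hxy

end IsApartChain

/-- Where the separation of `u` and `v` starts: from `([u], [v])` if `k` steps suffice to see that
they are inequivalent, and from empty lists otherwise. -/
def startApart (c : Code) : ℕ × ℕ × ℕ → List ℕ × List ℕ
  | (k, u, v) => if HaltsWithin c k [Nat.pair u v] then ([u], [v]) else ([], [])

theorem primrec_startApart (c : Code) : Primrec (startApart c) := by
  have hu : Primrec fun q : ℕ × ℕ × ℕ => q.2.1 := .comp .fst .snd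
  have hv : Primrec fun q : ℕ × ℕ × ℕ => q.2.2 := .comp .snd .snd
  have hsingleton {g : ℕ × ℕ × ℕ → ℕ} (hg : Primrec g) : Primrec fun q => [g q] :=
    Primrec.list_cons.comp hg (.const [])
  exact .ite (primrecPred_haltsWithin.comp
    (((Primrec.const c).pair .fst).pair (hsingleton (Primrec₂.natPair.comp hu hv))))
    ((hsingleton hu).pair (hsingleton hv)) (.const _)

theorem apart_startApart (hc : ∀ x y, ¬ E x y ↔ (c.eval (Nat.pair x y)).Dom) (q : ℕ × ℕ × ℕ) :
    Apart E (startApart c q) := by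
  obtain ⟨k, u, v⟩ := q
  by_cases h : HaltsWithin c k [Nat.pair u v]
  · have huv : ¬ E u v := by simpa [hc] using exists_haltsWithin_iff.1 ⟨k, h⟩
    simpa [startApart, h, Apart] using huv
  · simp [startApart, h, Apart]

theorem exists_computable₂_rel_iff_eq (hE : Equivalence E)
    (hc : ∀ x y, ¬ E x y ↔ (c.eval (Nat.pair x y)).Dom) :
    ∃ f : ℕ → ℕ × ℕ × ℕ → Bool, Computable₂ f ∧ ∀ x y, E x y ↔ f x = f y := by
  obtain ⟨S, hScomp, hS0, hS⟩ := exists_computable₂_orbit (primrec_startApart c).to_comp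
    (partrec₂_addApart c) (apart_startApart hc) (Apart.exists_mem_addApart hE hc)
  have hchain (q : ℕ × ℕ × ℕ) : IsApartChain E c (S q) := hS q
  refine ⟨fun x q => decide (x ∈ (S q (x + 1)).1), ?_, fun x y => ⟨fun hxy => ?_, fun hf => ?_⟩⟩
  · have hmem : PrimrecRel fun (l : List ℕ) (x : ℕ) => x ∈ l :=
      Primrec.eq.exists_mem_list.of_eq fun l x => by simp
    exact hmem.decide.to_comp.comp
      (.comp .fst (hScomp.comp .snd (Computable.succ.comp .fst))) .fst
  · funext q
    exact decide_eq_decide.2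
      ⟨(hchain q).mem_of_rel hxy, (hchain q).mem_of_rel (hE.symm hxy)⟩
  · by_contra hxy
    obtain ⟨k, hk⟩ : ∃ k, HaltsWithin c k [Nat.pair x y] :=
      exists_haltsWithin_iff.2 (by simpa using (hc x y).1 hxy)
    have h0 : S (k, x, y) 0 = ([x], [y]) := by rw [hS0]; exact if_pos hk
    have hx : x ∈ (S (k, x, y) (x + 1)).1 := ((hchain _).subset (Nat.zero_le _)).1 (by simp [h0])
    have hy : y ∈ (S (k, x, y) (y + 1)).1 :=
      (decide_eq_decide.1 (congrFun hf (k, x, y))).1 hx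
    exact (hchain _).not_rel hy (n := 0) (by simp [h0]) (hE.refl y)

end Separation

section UniversalFamily

/-- A computable family of functions, into which every computable family `f : ℕ → ℕ → ℕ` embeds:
the row `f x` becomes the row with index `(c, [f x 0, …, f x (x - 1)])`, where `c` is a code for
`f`. Column `(n, k)` shows `f x n`, provided that `k` steps suffice to compute `f i n` for all
`i ≤ n`. The proviso does not depend on `x`, and if `x > n` then the value is read off the list. -/
def universalFamily (z : Code × List ℕ) (p : ℕ × ℕ) : Option ℕ :=
  if HaltsWithin z.1 p.2 ((List.range (p.1 + 1)).map (Nat.pair · p.1)) then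
    z.2[p.1]? <|> z.1.evaln p.2 (Nat.pair z.2.length p.1)
  else none

theorem primrec₂_universalFamily : Primrec₂ universalFamily := by
  have hc : Primrec fun q : (Code × List ℕ) × ℕ × ℕ => q.1.1 := .comp .fst .fst
  have hl : Primrec fun q : (Code × List ℕ) × ℕ × ℕ => q.1.2 := .comp .snd .fst
  have hn : Primrec fun q : (Code × List ℕ) × ℕ × ℕ => q.2.1 := .comp .fst .snd
  have hk : Primrec fun q : (Code × List ℕ) × ℕ × ℕ => q.2.2 := .comp .snd .snd
  refine .ite (primrecPred_haltsWithin.comp ((hc.pair hk).pair ?_))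
    (Primrec.option_orElse.comp (Primrec.list_getElem?.comp hl hn) ?_) (.const none)
  · exact Primrec.list_map (Primrec.list_range.comp (Primrec.succ.comp hn))
      (Primrec₂.natPair.comp .snd (hn.comp .fst))
  · exact Code.primrec_evaln.comp
      ((hk.pair hc).pair (Primrec₂.natPair.comp (Primrec.list_length.comp hl) hn))

theorem universalFamily_apply {f : ℕ → ℕ → ℕ} {c : Code}
    (hc : ∀ x n, c.eval (Nat.pair x n) = Part.some (f x n)) (x n k : ℕ) :
    universalFamily (c, (List.range x).map (f x)) (n, k) =
      if HaltsWithin c k ((List.range (n + 1)).map (Nat.pair · n)) then some (f x n) else none := by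
  simp only [universalFamily, List.length_map, List.length_range]
  refine ite_congr rfl (fun hk => ?_) fun _ => rfl
  rcases lt_or_ge n x with hnx | hxn
  · simp [hnx]
  · have hx : (c.evaln k (Nat.pair x n)).isSome :=
      hk _ (List.mem_map.2 ⟨x, List.mem_range.2 (Nat.lt_succ_of_le hxn), rfl⟩)
    obtain ⟨v, hv⟩ := Option.isSome_iff_exists.1 hx
    have hvf : v = f x n := by simpa [hc] using Code.evaln_sound hv
    simp [hv, hvf, hxn]

theorem universalFamily_eq_iff {f : ℕ → ℕ → ℕ} {c : Code}
    (hc : ∀ x n, c.eval (Nat.pair x n) = Part.some (f x n)) (x y : ℕ) :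
    universalFamily (c, (List.range x).map (f x)) = universalFamily (c, (List.range y).map (f y)) ↔
      f x = f y := by
  refine ⟨fun h => funext fun n => ?_, fun h => funext fun ⟨n, k⟩ => ?_⟩
  · obtain ⟨k, hk⟩ : ∃ k, HaltsWithin c k ((List.range (n + 1)).map (Nat.pair · n)) :=
      exists_haltsWithin_iff.2 (by simp [hc])
    simpa [universalFamily_apply hc, hk] using congrFun h (n, k)
  · rw [universalFamily_apply hc, universalFamily_apply hc, h]

theorem computable₂_map_range {α β : Type*} [Primcodable α] [Primcodable β] {f : α → ℕ → β}
    (hf : Computable₂ f) : Computable₂ fun a n => (List.range n).map (f a) := by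
  have hrec := Computable.nat_rec (f := fun q : α × ℕ => q.2) (g := fun _ => ([] : List β))
    (h := fun q r => r.2 ++ [f q.1 r.1]) .snd (.const [])
    (Computable.list_append.comp (.comp .snd .snd)
      (Computable.list_cons.comp (hf.comp (.comp .fst .fst) (.comp .fst .snd)) (.const [])))
  refine hrec.of_eq fun ⟨a, n⟩ => ?_
  induction n with
  | zero => rfl
  | succ n ih =>
    simp only at ih ⊢
    rw [List.range_succ, List.map_append, ih, List.map_singleton]

theorem computablyReducible_universalFamily {f : ℕ → ℕ → ℕ} (hf : Computable₂ f) :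
    ComputablyReducible (Function.onFun Eq f) (Function.onFun Eq universalFamily) := by
  obtain ⟨c, hc⟩ := Code.exists_code.1 (Partrec.nat_iff.1
    (hf.comp (Computable.fst.comp .unpair) (Computable.snd.comp .unpair)).partrec)
  have hc (x n : ℕ) : c.eval (Nat.pair x n) = Part.some (f x n) := by simp [hc]
  exact ⟨fun x => (c, (List.range x).map (f x)),
    (Computable.const c).pair ((computable₂_map_range hf).comp .id .id),
    fun x y => (universalFamily_eq_iff hc x y).symm⟩

end UniversalFamily

section EncodedFamily

variable {α β γ : Type*} [Denumerable α] [Denumerable β]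

/-- The family `F` with rows, columns and values replaced by their numerical codes. -/
def encodedFamily [Encodable γ] (F : α → β → γ) (m n : ℕ) : ℕ :=
  encode (F (ofNat α m) (ofNat β n))

theorem computable₂_encodedFamily [Primcodable γ] {F : α → β → γ} (hF : Computable₂ F) :
    Computable₂ (encodedFamily F) :=
  Computable.encode.comp
    (hF.comp ((Computable.ofNat α).comp .fst) ((Computable.ofNat β).comp .snd))

theorem computablyReducible_encodedFamily [Encodable γ] (F : α → β → γ) :
    ComputablyReducible (Function.onFun Eq F) (Function.onFun Eq (encodedFamily F)) := by
  refine ⟨encode, Computable.encode, fun x y => ?_⟩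
  simp only [Function.onFun, funext_iff, encodedFamily, ofNat_encode, encode_inj]
  exact (Denumerable.eqv β).symm.surjective.forall

end EncodedFamily

section Int

theorem primrec_intEquivNatSumNat : Primrec Equiv.intEquivNatSumNat :=
  Primrec.encode_iff.1 (Primrec.encode.of_eq fun z => by cases z <;> rfl)

theorem primrec_intEquivNatSumNat_symm : Primrec Equiv.intEquivNatSumNat.symm :=
  Primrec.encode_iff.1 (Primrec.encode.of_eq fun z => by cases z <;> rfl)

theorem primrec_int_toNat : Primrec Int.toNat :=
  (Primrec.sumCasesOn primrec_intEquivNatSumNat Primrec₂.right (.const 0)).of_eq fun z => by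
    cases z <;> rfl

theorem primrec_int_add_one : Primrec fun z : ℤ => z + 1 := by
  have hofNat : Primrec Int.ofNat := primrec_intEquivNatSumNat_symm.comp .sumInl
  have hnegSucc : Primrec Int.negSucc := primrec_intEquivNatSumNat_symm.comp .sumInr
  refine (Primrec.sumCasesOn primrec_intEquivNatSumNat
    (hofNat.comp (Primrec.succ.comp .snd)).to₂
    (Primrec.nat_casesOn .snd (.const 0) (hnegSucc.comp .snd).to₂).to₂).of_eq fun z => ?_
  rcases z with n | _ | n <;> rfl

end Int

section Generators

/-- The points on which the three generators act. The middle coordinate is a column of a family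
`F : ℕ → ℕ → ℕ`, the first one points to a row of `F`. -/
abbrev Point : Type := ℤ × ℕ × ℕ

/-- Move the pointer to the next row. -/
def shift : Perm Point := (Equiv.addRight 1).prodCongr (.refl _)

/-- At row `z` and column `n`, transpose `1` and `G z n + 2`. -/
def valueSwap (G : ℤ → ℕ → ℕ) : Perm Point :=
  Equiv.prodCongrRight fun z => Equiv.prodCongrRight fun n => swap 1 (G z n + 2)

/-- Where the pointer is at `0`, apply the permutation `σ n` at column `n`. -/
def atOrigin (σ : ℕ → Perm ℕ) : Perm Point :=
  Perm.prodExtendRight (0 : ℤ) (Equiv.prodCongrRight σ)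

theorem shift_pow_apply (m : ℕ) (z : ℤ) (q : ℕ × ℕ) : (shift ^ m) (z, q) = (z + m, q) := by
  induction m with
  | zero => simp
  | succ m ih => rw [pow_succ', Perm.mul_apply, ih]; simp [shift, add_assoc]

theorem shift_conj_valueSwap (G : ℤ → ℕ → ℕ) (m : ℕ) :
    (shift⁻¹) ^ m * valueSwap G * shift ^ m = valueSwap fun z => G (z + m) := by
  rw [inv_pow, mul_assoc, inv_mul_eq_iff_eq_mul]
  ext1 ⟨z, n, v⟩
  simp [shift_pow_apply, valueSwap]

theorem valueSwap_conj_atOrigin (G : ℤ → ℕ → ℕ) :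
    valueSwap G * atOrigin (fun _ => swap 0 1) * valueSwap G =
      atOrigin fun n => swap 0 (G 0 n + 2) := by
  ext1 ⟨z, n, v⟩
  rcases eq_or_ne z 0 with rfl | hz
  · have hswap : swap 1 (G 0 n + 2) * swap 0 1 * swap 1 (G 0 n + 2) = swap 0 (G 0 n + 2) := by
      rw [Equiv.swap_mul_swap_mul_swap (by omega) (by omega), Equiv.swap_comm]
    simp [valueSwap, atOrigin, ← hswap]
  · simp [valueSwap, atOrigin, Perm.prodExtendRight_apply_ne _ hz]

theorem atOrigin_injective : Function.Injective atOrigin := by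
  intro σ τ h
  funext n
  ext v
  simpa [atOrigin] using congrArg (fun ρ : Perm Point => (ρ (0, n, v)).2.2) h

end Generators

section WordProblem

/-- The word problem of the group generated by the permutations `g i`; the letters `(i, true)` and
`(i, false)` stand for `g i` and its inverse. -/
def wordProblem {ι : Type*} (g : ι → Perm ℕ) (v w : List (ι × Bool)) : Prop :=
  FreeGroup.lift g (FreeGroup.mk v) = FreeGroup.lift g (FreeGroup.mk w)

/-- Generators whose word problem encodes equality of rows of `F`, transported to `ℕ`. The rows with
a negative index, which have no significance, are taken to be equal to `F 0`. -/
def generators (F : ℕ → ℕ → ℕ) (i : Fin 3) : Perm ℕ :=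
  (Denumerable.eqv Point).permCongrHom
    (![shift, valueSwap fun z => F z.toNat, atOrigin fun _ => swap 0 1] i)

/-- A word for `valueSwap` with the rows moved by `m`. -/
def valueSwapWord (m : ℕ) : List (Fin 3 × Bool) :=
  List.replicate m (0, false) ++ [(1, true)] ++ List.replicate m (0, true)

/-- A word for the permutation that transposes `0` and `F m n + 2` in each column `n`, where the
pointer is at `0`. It encodes the row `F m`. -/
def rowWord (m : ℕ) : List (Fin 3 × Bool) :=
  valueSwapWord m ++ [(2, true)] ++ valueSwapWord m

theorem lift_generators_rowWord (F : ℕ → ℕ → ℕ) (m : ℕ) :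
    FreeGroup.lift (generators F) (FreeGroup.mk (rowWord m)) =
      (Denumerable.eqv Point).permCongrHom (atOrigin fun n => swap 0 (F m n + 2)) := by
  have hrow : (atOrigin fun n => swap 0 (F m n + 2)) =
      atOrigin fun n => swap 0 (F (0 + (m : ℤ)).toNat n + 2) := by simp
  rw [hrow, ← valueSwap_conj_atOrigin fun z => F (z + m).toNat,
    ← shift_conj_valueSwap fun z => F z.toNat, FreeGroup.lift_mk]
  simp only [rowWord, valueSwapWord, List.map_append, List.map_replicate, List.map_cons,
    List.map_nil, List.prod_append, List.prod_replicate, List.prod_cons, List.prod_nil, mul_one,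
    map_mul, map_pow, map_inv, cond_true, cond_false]
  rfl

theorem wordProblem_rowWord_iff (F : ℕ → ℕ → ℕ) (m m' : ℕ) :
    wordProblem (generators F) (rowWord m) (rowWord m') ↔ F m = F m' := by
  have hswap (k k' : ℕ) : swap 0 (k + 2) = swap 0 (k' + 2) ↔ k = k' :=
    ⟨fun h => by simpa using congrArg (· 0) h, fun h => by rw [h]⟩
  rw [wordProblem, lift_generators_rowWord, lift_generators_rowWord,
    EmbeddingLike.apply_eq_iff_eq, atOrigin_injective.eq_iff]
  simp only [funext_iff, hswap]

theorem primrec_rowWord : Primrec rowWord := by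
  have happend {l l' : ℕ → List (Fin 3 × Bool)} (hl : Primrec l) (hl' : Primrec l') :
      Primrec fun m => l m ++ l' m := Primrec.list_append.comp hl hl'
  have hreplicate (i : Fin 3 × Bool) : Primrec fun m => List.replicate m i :=
    (Primrec.list_map .list_range (.const i)).of_eq fun m => by simp
  have hword : Primrec valueSwapWord :=
    happend (happend (hreplicate _) (.const _)) (hreplicate _)
  exact happend (happend hword (.const _)) hword

theorem computablyReducible_wordProblem_generators (F : ℕ → ℕ → ℕ) :
    ComputablyReducible (Function.onFun Eq F) (wordProblem (generators F)) :=
  ⟨rowWord, primrec_rowWord.to_comp, fun m m' => (wordProblem_rowWord_iff F m m').symm⟩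

end WordProblem

section Computability

theorem computable_permCongrHom_eqv {α : Type*} [Denumerable α] {σ : Perm α} (hσ : Computable σ) :
    Computable ((Denumerable.eqv α).permCongrHom σ) :=
  Computable.encode.comp (hσ.comp (Computable.ofNat α))

theorem primrec₂_swap {α : Type*} [Primcodable α] [DecidableEq α] :
    Primrec₂ fun (p : α × α) (a : α) => swap p.1 p.2 a := by
  have ha : Primrec fun q : (α × α) × α => q.1.1 := .comp .fst .fst
  have hb : Primrec fun q : (α × α) × α => q.1.2 := .comp .snd .fst
  exact (Primrec.ite (Primrec.eq.comp .snd ha) hb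
    (.ite (Primrec.eq.comp .snd hb) ha .snd)).of_eq fun q => (Equiv.swap_apply_def ..).symm

theorem primrec_shift : Primrec shift :=
  (primrec_int_add_one.comp .fst).pair .snd

theorem computable_valueSwap {G : ℤ → ℕ → ℕ} (hG : Computable₂ G) : Computable (valueSwap G) := by
  have hn : Computable fun q : Point => q.2.1 := .comp .fst .snd
  have hv : Computable fun q : Point => q.2.2 := .comp .snd .snd
  have hvalue : Computable fun q : Point => G q.1 q.2.1 + 2 :=
    (Computable.succ.comp .succ).comp (hG.comp .fst hn)
  have hswap := primrec₂_swap.to_comp.comp ((Computable.const 1).pair hvalue) hv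
  exact Computable.fst.pair (hn.pair hswap)

theorem primrec_atOrigin {σ : ℕ → Perm ℕ} (hσ : Primrec₂ fun n v => σ n v) :
    Primrec (atOrigin σ) := by
  have hσ : Primrec fun q : Point => (q.2.1, σ q.2.1 q.2.2) :=
    (Primrec.comp .fst .snd).pair (hσ.comp (.comp .fst .snd) (.comp .snd .snd))
  exact .ite (Primrec.eq.comp .fst (.const 0)) ((Primrec.const 0).pair hσ) .id

theorem computable_generators {F : ℕ → ℕ → ℕ} (hF : Computable₂ F) (i : Fin 3) :
    Computable (generators F i) := by
  have hrow : Computable₂ fun z : ℤ => F z.toNat :=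
    hF.comp (primrec_int_toNat.to_comp.comp .fst) .snd
  have hswap : Primrec₂ fun _ v : ℕ => swap 0 1 v := primrec₂_swap.comp (.const (0, 1)) .snd
  have h₀ := computable_permCongrHom_eqv primrec_shift.to_comp
  have h₁ := computable_permCongrHom_eqv (computable_valueSwap hrow)
  have h₂ := computable_permCongrHom_eqv (primrec_atOrigin hswap).to_comp
  match i with
  | 0 => exact h₀
  | 1 => exact h₁
  | 2 => exact h₂

end Computability

theorem stmt15 :
    -- there is a group generated by three computable permutations of ℕ whose
    -- word problem is Π⁰₁-universal: every Π⁰₁ equivalence relation computably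
    -- reduces to it
    ∃ g : Fin 3 → Equiv.Perm ℕ,
      (∀ i, Computable ⇑(g i)) ∧
      ∀ E : ℕ → ℕ → Prop, Equivalence E → Pi01Rel E →
        ∃ h : ℕ → List (Fin 3 × Bool), Computable h ∧
          ∀ x y : ℕ, E x y ↔
            FreeGroup.lift g (FreeGroup.mk (h x)) =
              FreeGroup.lift g (FreeGroup.mk (h y)) := by
  refine ⟨generators (encodedFamily universalFamily),
    computable_generators (computable₂_encodedFamily primrec₂_universalFamily.to_comp),
    fun E hE ⟨_, he⟩ => ?_⟩
  obtain ⟨f, hf, hEf⟩ := exists_computable₂_rel_iff_eq hE he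
  have hE_rows : ComputablyReducible E (Function.onFun Eq f) := ⟨id, .id, hEf⟩
  exact hE_rows
    |>.trans (computablyReducible_encodedFamily f)
    |>.trans (computablyReducible_universalFamily (computable₂_encodedFamily hf))
    |>.trans (computablyReducible_encodedFamily universalFamily)
    |>.trans (computablyReducible_wordProblem_generators _)
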